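/- The weight function w₇(λ,x) = [log(1+λ+x)/(λ+x)] · [x/log(1+x)] is strictly totally positive of order infinity on (0,∞)²: for every r ≥ 1 and all λ₁ > λ₂ > ⋯ > λ_r > 0 and x₁ > x₂ > ⋯ > x_r > 0, the r×r determinant det( (w₇(λ_i,x_j))_{i,j=1}^r ) is strictly positive. -/

import Mathlib

/-!
If `T` is uniform on `(0, 1]` and `V` is an independent standard exponential variable, then
`E[exp (-z * T * V)] = ∫ t in 0..1, (1 + t * z)⁻¹ = log (1 + z) / z`. So, writing `ν` for the law of
`T * V`, the kernel `log (1 + lam + x) / (lam + x)` is `∫ u, exp (-lam * u) * exp (-x * u) ∂ν`, and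
Andréief's identity expresses `r !` times its determinant as the integral over `ν ^ r` of a product
of two exponential determinants `det (exp (s i * u j))`. Such a determinant vanishes only when two
exponents or two nodes coincide, so its sign is the same for all increasing exponents and the
product is positive whenever the nodes are distinct, which happens with positive probability since
the support of `ν` is infinite. The factor `x / log (1 + x)` merely rescales the columns.
-/

open Function Matrix MeasureTheory ProbabilityTheory Set

lemma exists_strictMono_deriv_eq_zero {n : ℕ} {f : ℝ → ℝ} (hf : Continuous f)
    {z : Fin (n + 1) → ℝ} (hz : StrictMono z) (hfz : ∀ k, f (z k) = 0) :
    ∃ y : Fin n → ℝ, StrictMono y ∧ ∀ k, deriv f (y k) = 0 := by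
  have rolle (k : Fin n) : ∃ y ∈ Ioo (z k.castSucc) (z k.succ), deriv f y = 0 :=
    exists_deriv_eq_zero (hz k.castSucc_lt_succ) hf.continuousOn ((hfz _).trans (hfz _).symm)
  choose y hyz hy using rolle
  refine ⟨y, fun k l hkl => ?_, hy⟩
  calc
    y k < z k.succ := (hyz k).2
    _ ≤ z l.castSucc := hz.monotone (Fin.succ_le_castSucc_iff.2 hkl)
    _ < y l := (hyz l).1

lemma eq_zero_of_sum_mul_exp_eq_zero {n : ℕ} {a c z : Fin n → ℝ} (ha : Injective a)
    (hz : StrictMono z) (hcz : ∀ k, ∑ i, c i * Real.exp (a i * z k) = 0) : c = 0 := by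
  induction n with
  | zero => exact Subsingleton.elim _ _
  | succ n ih =>
    let b : Fin n → ℝ := fun i => a i.succ - a 0
    have hb : Injective b := fun i j hij => Fin.succ_injective n (ha (sub_left_injective hij))
    have hb0 (i : Fin n) : b i ≠ 0 := sub_ne_zero.2 (ha.ne (Fin.succ_ne_zero i))
    -- Division by `exp (a 0 * u)` makes the first term constant, so differentiation removes it.
    let f : ℝ → ℝ := fun u => c 0 + ∑ i, c i.succ * Real.exp (b i * u)
    have hfz (k : Fin (n + 1)) : f (z k) = 0 := by
      have : f (z k) = Real.exp (-(a 0 * z k)) * ∑ i, c i * Real.exp (a i * z k) := by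
        simp only [f, b, Fin.sum_univ_succ, mul_add, Finset.mul_sum, mul_left_comm (Real.exp _),
          ← Real.exp_add, neg_add_cancel, Real.exp_zero, mul_one, sub_mul, neg_add_eq_sub]
      rw [this, hcz, mul_zero]
    have hf (u : ℝ) : HasDerivAt f (∑ i, c i.succ * b i * Real.exp (b i * u)) u := by
      refine (HasDerivAt.fun_sum fun i _ => ?_).const_add _
      convert! (((hasDerivAt_id u).const_mul (b i)).exp.const_mul (c i.succ)) using 1
      simp only [id_eq, mul_one]
      ring
    obtain ⟨y, hy, hfy⟩ := exists_strictMono_deriv_eq_zero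
      (continuous_iff_continuousAt.2 fun u => (hf u).continuousAt) hz hfz
    have hcb : (fun i => c i.succ * b i) = 0 := ih hb hy fun k => (hf _).deriv ▸ hfy k
    have hsucc (i : Fin n) : c i.succ = 0 :=
      (mul_eq_zero.1 (congrFun hcb i)).resolve_right (hb0 i)
    have hzero : c 0 = 0 := by simpa [f, hsucc] using hfz 0
    exact funext (Fin.cases hzero hsucc)

lemma det_exp_mul_ne_zero {r : ℕ} {s u : Fin r → ℝ} (hs : Injective s) (hu : Injective u) :
    (of fun i j => Real.exp (s i * u j)).det ≠ 0 := by
  intro hdet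
  obtain ⟨c, hc, hcu⟩ := exists_vecMul_eq_zero_iff.2 hdet
  have hsorted : StrictMono (u ∘ Tuple.sort u) :=
    (Tuple.monotone_sort u).strictMono_of_injective (hu.comp (Tuple.sort u).injective)
  exact hc (eq_zero_of_sum_mul_exp_eq_zero hs hsorted fun k => congrFun hcu (Tuple.sort u k))

lemma convex_setOf_strictMono {ι : Type*} [Preorder ι] : Convex ℝ {s : ι → ℝ | StrictMono s} := by
  intro s (hs : StrictMono s) t (ht : StrictMono t) a b ha hb hab
  change StrictMono fun i => a * s i + b * t i
  rcases ha.eq_or_lt with rfl | ha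
  · obtain rfl : b = 1 := by rwa [zero_add] at hab
    simpa only [zero_mul, one_mul, zero_add] using ht
  · exact fun i j hij => add_lt_add_of_lt_of_le (hs.const_mul ha hij)
      (mul_le_mul_of_nonneg_left (ht hij).le hb)

lemma det_exp_mul_mul_det_exp_mul_pos {r : ℕ} {s t u : Fin r → ℝ} (hs : StrictMono s)
    (ht : StrictMono t) (hu : Injective u) :
    0 < (of fun i j => Real.exp (s i * u j)).det * (of fun i j => Real.exp (t i * u j)).det := by
  -- The increasing tuples form a convex set, on which the continuous function `D` has no zero.
  let D : (Fin r → ℝ) → ℝ := fun p => (of fun i j => Real.exp (p i * u j)).det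
  have hD : Continuous D := Continuous.matrix_det (continuous_matrix fun i j => by
    simp only [of_apply]; fun_prop)
  have hconn : OrdConnected (D '' {p | StrictMono p}) :=
    (convex_setOf_strictMono.isPreconnected.image D hD.continuousOn).ordConnected
  have hD0 : (0 : ℝ) ∉ D '' {p | StrictMono p} := by
    rintro ⟨p, hp, hp0⟩
    exact det_exp_mul_ne_zero hp.injective hu hp0
  by_contra! hneg
  refine hD0 (hconn.uIcc_subset ⟨s, hs, rfl⟩ ⟨t, ht, rfl⟩ (mem_uIcc.2 ?_))
  exact (mul_nonpos_iff.1 hneg).symm.imp_right And.symm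

lemma det_exp_mul_mul_det_exp_mul_nonneg {r : ℕ} {s t : Fin r → ℝ} (hs : StrictMono s)
    (ht : StrictMono t) (u : Fin r → ℝ) :
    0 ≤ (of fun i j => Real.exp (s i * u j)).det * (of fun i j => Real.exp (t i * u j)).det := by
  by_cases hu : Injective u
  · exact (det_exp_mul_mul_det_exp_mul_pos hs ht hu).le
  · obtain ⟨i, j, hij, hne⟩ := not_injective_iff.1 hu
    rw [det_zero_of_column_eq hne fun k => by simp only [of_apply, hij], zero_mul]

section Andreief

variable {ι 𝕜 : Type*} [Fintype ι] [DecidableEq ι] [RCLike 𝕜]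

lemma integrable_det_pi {E : ι → Type*} [∀ j, MeasurableSpace (E j)] {μ : ∀ j, Measure (E j)}
    [∀ j, SigmaFinite (μ j)] {F : ι → ∀ j, E j → 𝕜} (hF : ∀ i j, Integrable (F i j) (μ j)) :
    Integrable (fun u : ∀ j, E j => (of fun i j => F i j (u j)).det) (Measure.pi μ) := by
  simp only [det_apply', of_apply]
  exact integrable_finsetSum _ fun σ _ =>
    (Integrable.fintype_prod_dep fun j => hF (σ j) j).const_mul _

lemma integral_det_pi {E : ι → Type*} [∀ j, MeasurableSpace (E j)] {μ : ∀ j, Measure (E j)}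
    [∀ j, SigmaFinite (μ j)] {F : ι → ∀ j, E j → 𝕜} (hF : ∀ i j, Integrable (F i j) (μ j)) :
    ∫ u : ∀ j, E j, (of fun i j => F i j (u j)).det ∂Measure.pi μ =
      (of fun i j => ∫ x, F i j x ∂μ j).det := by
  simp only [det_apply', of_apply]
  rw [integral_finsetSum _ fun σ _ =>
    (Integrable.fintype_prod_dep fun j => hF (σ j) j).const_mul _]
  simp only [integral_const_mul, integral_fintype_prod_eq_prod]

variable {X : Type*} {f g : ι → X → 𝕜}

lemma det_mul_det_eq_sum_sign_mul_det (u : ι → X) :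
    (of fun i j => f i (u j)).det * (of fun i j => g i (u j)).det =
      ∑ τ : Equiv.Perm ι, (Equiv.Perm.sign τ : 𝕜) *
        (of fun i j => f i (u j) * g (τ j) (u j)).det := by
  rw [det_apply' (of fun i j => g i (u j)), Finset.mul_sum]
  refine Finset.sum_congr rfl fun τ _ => ?_
  have hdet := det_mul_row (fun j => g (τ j) (u j)) (of fun i j => f i (u j))
  simp only [of_apply, mul_comm (g _ _)] at hdet ⊢
  rw [hdet]
  ring

variable [MeasurableSpace X] {μ : Measure X} [SigmaFinite μ]

lemma integrable_det_mul_det (hfg : ∀ i j, Integrable (fun x => f i x * g j x) μ) :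
    Integrable (fun u : ι → X => (of fun i j => f i (u j)).det * (of fun i j => g i (u j)).det)
      (Measure.pi fun _ => μ) := by
  simp only [det_mul_det_eq_sum_sign_mul_det]
  exact integrable_finsetSum _ fun τ _ => (integrable_det_pi fun i j => hfg i (τ j)).const_mul _

/-- **Andréief's identity**. -/
theorem integral_det_mul_det (hfg : ∀ i j, Integrable (fun x => f i x * g j x) μ) :
    ∫ u : ι → X, (of fun i j => f i (u j)).det * (of fun i j => g i (u j)).det
        ∂Measure.pi (fun _ => μ) =
      (Fintype.card ι).factorial * (of fun i j => ∫ x, f i x * g j x ∂μ).det := by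
  set M : Matrix ι ι 𝕜 := of fun i j => ∫ x, f i x * g j x ∂μ
  have hterm (τ : Equiv.Perm ι) :
      (Equiv.Perm.sign τ : 𝕜) * (of fun i j => ∫ x, f i x * g (τ j) x ∂μ).det = M.det := by
    change _ * (M.submatrix id τ).det = _
    rw [det_permute', ← mul_assoc, ← Int.cast_mul, ← Units.val_mul, Int.units_mul_self,
      Units.val_one, Int.cast_one, one_mul]
  simp only [det_mul_det_eq_sum_sign_mul_det]
  rw [integral_finsetSum _ fun τ _ => (integrable_det_pi fun i j => hfg i (τ j)).const_mul _]
  simp only [integral_const_mul]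
  calc
    _ = ∑ _τ : Equiv.Perm ι, M.det := Finset.sum_congr rfl fun τ _ => by
      rw [integral_det_pi fun i j => hfg i (τ j), hterm]
    _ = _ := by rw [Finset.sum_const, Finset.card_univ, Fintype.card_perm, nsmul_eq_mul]

end Andreief

lemma measure_pi_setOf_injective_pos {ι X : Type*} [Fintype ι] [TopologicalSpace X] [T2Space X]
    [MeasurableSpace X] {ν : Measure X} [SigmaFinite ν]
    (hν : (Fintype.card ι : ℕ∞) ≤ ν.support.encard) :
    0 < Measure.pi (fun _ : ι => ν) {u | Injective u} := by
  classical
  obtain ⟨S, hSν, hS⟩ := exists_subset_encard_eq hν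
  have hSfin : S.Finite := finite_of_encard_eq_coe hS
  have : Fintype S := hSfin.fintype
  obtain ⟨e⟩ : Nonempty (ι ≃ S) := Fintype.card_eq.1 (by
    simpa [← ENat.natCast_inj, ← encard_eq_coe_toFinset_card] using hS.symm)
  obtain ⟨U, hU, hdisj⟩ := hSfin.t2_separation
  calc
    0 < Measure.pi (fun _ : ι => ν) (univ.pi fun i => U (e i)) := by
      rw [Measure.pi_pi]
      refine pos_iff_ne_zero.2 (Finset.prod_ne_zero_iff.2 fun i _ => ?_)
      exact ((Measure.mem_support_iff_forall _).1 (hSν (e i).2) _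
        ((hU (e i)).2.mem_nhds (hU (e i)).1)).ne'
    _ ≤ _ := by
      refine measure_mono fun u hu i j hij => e.injective (Subtype.ext ?_)
      refine hdisj.elim (e i).2 (e j).2 (not_disjoint_iff.2 ⟨u i, hu i trivial, ?_⟩)
      exact hij ▸ hu j trivial

lemma infinite_support_of_nullSingletonClass {X : Type*} [TopologicalSpace X]
    [HereditarilyLindelofSpace X] [MeasurableSpace X] {ν : Measure X}
    [NullSingletonClass ν] [NeZero ν] : ν.support.Infinite := by
  intro hfin
  refine NeZero.ne ν (Measure.measure_univ_eq_zero.1 ?_)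
  rw [← union_compl_self ν.support, measure_union_null_iff]
  exact ⟨hfin.measure_zero ν, Measure.measure_compl_support⟩

section Exponential

variable {a s : ℝ}

instance : NullSingletonClass (expMeasure a) :=
  inferInstanceAs (NullSingletonClass (volume.withDensity (exponentialPDF a)))

lemma integrable_expMeasure_iff {f : ℝ → ℝ} :
    Integrable f (expMeasure a) ↔ Integrable fun x => (exponentialPDF a x).toReal * f x :=
  integrable_withDensity_iff_integrable_smul' (measurable_exponentialPDFReal a).ennreal_ofReal
    (ae_of_all _ fun _ => ENNReal.ofReal_lt_top)

lemma integral_expMeasure (f : ℝ → ℝ) :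
    ∫ x, f x ∂expMeasure a = ∫ x, (exponentialPDF a x).toReal * f x :=
  integral_withDensity_eq_integral_toReal_smul (measurable_exponentialPDFReal a).ennreal_ofReal
    (ae_of_all _ fun _ => ENNReal.ofReal_lt_top) f

lemma toReal_exponentialPDF_mul_exp (ha : 0 < a) (x : ℝ) :
    (exponentialPDF a x).toReal * Real.exp (s * x) =
      (Ici 0).indicator (fun x => a * Real.exp ((s - a) * x)) x := by
  rw [exponentialPDF, ENNReal.toReal_ofReal (exponentialPDFReal_nonneg ha x)]
  by_cases hx : 0 ≤ x
  · simp only [exponentialPDFReal, gammaPDFReal, hx, if_true, indicator_of_mem (mem_Ici.2 hx),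
      Real.rpow_one, Real.Gamma_one, div_one, sub_self, Real.rpow_zero, mul_one, mul_assoc,
      ← Real.exp_add]
    ring_nf
  · simp [exponentialPDFReal, gammaPDFReal, hx]

lemma mem_integrableExpSet_expMeasure (ha : 0 < a) (hs : s < a) :
    s ∈ integrableExpSet id (expMeasure a) := by
  rw [integrableExpSet, mem_ofPred_eq, integrable_expMeasure_iff]
  simp only [id_eq, toReal_exponentialPDF_mul_exp ha]
  rw [integrable_indicator_iff measurableSet_Ici, integrableOn_Ici_iff_integrableOn_Ioi]
  exact (integrableOn_exp_mul_Ioi (sub_neg.2 hs) 0).const_mul a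

lemma mgf_id_expMeasure (ha : 0 < a) (hs : s < a) : mgf id (expMeasure a) s = a / (a - s) := by
  rw [mgf, integral_expMeasure]
  simp only [id_eq, toReal_exponentialPDF_mul_exp ha]
  rw [integral_indicator measurableSet_Ici, integral_Ici_eq_integral_Ioi, integral_const_mul,
    integral_exp_mul_Ioi (sub_neg.2 hs), mul_zero, Real.exp_zero, neg_div, ← div_neg, neg_sub,
    mul_one_div]

end Exponential

/-- The law of `T * V`, where `V` has law `ν` and `T` is independent of `V` and uniform on `(0, 1]`.
Its moment generating function at `s` averages that of `ν` over the segment from `0` to `s`. -/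
noncomputable def uniformScaling (ν : Measure ℝ) : Measure ℝ :=
  ((volume.restrict (Ioc 0 1)).prod ν).map fun p => p.1 * p.2

section UniformScaling

variable {ν : Measure ℝ} {s : ℝ}

instance [IsProbabilityMeasure ν] : IsProbabilityMeasure (uniformScaling ν) :=
  have : IsProbabilityMeasure (volume.restrict (Ioc (0 : ℝ) 1)) := ⟨by simp⟩
  Measure.isProbabilityMeasure_map (by fun_prop)

instance [SFinite ν] [NullSingletonClass ν] : NullSingletonClass (uniformScaling ν) where
  measure_singleton c := by
    have hmeas : MeasurableSet ((fun p : ℝ × ℝ => p.1 * p.2) ⁻¹' {c}) :=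
      (by fun_prop : Measurable fun p : ℝ × ℝ => p.1 * p.2) (measurableSet_singleton c)
    rw [uniformScaling, Measure.map_apply (by fun_prop) (measurableSet_singleton c),
      Measure.measure_prod_null hmeas]
    filter_upwards [ae_restrict_mem measurableSet_Ioc] with t ht
    refine Subsingleton.measure_zero (fun v hv w hw => ?_) ν
    exact mul_left_cancel₀ ht.1.ne' (Eq.trans hv hw.symm)

lemma integrable_exp_mul_mul_prod [IsFiniteMeasure ν] (hs : s ∈ integrableExpSet id ν) :
    Integrable (fun p : ℝ × ℝ => Real.exp (s * (p.1 * p.2)))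
      ((volume.restrict (Ioc 0 1)).prod ν) := by
  have hbound : Integrable (fun p : ℝ × ℝ => 1 + Real.exp (s * p.2))
      ((volume.restrict (Ioc 0 1)).prod ν) :=
    (integrable_const 1).add (Integrable.comp_snd hs _)
  refine hbound.mono' (by fun_prop) ?_
  have hmem : ∀ᵐ p ∂(volume.restrict (Ioc (0 : ℝ) 1)).prod ν, p.1 ∈ Ioc (0 : ℝ) 1 :=
    Measure.quasiMeasurePreserving_fst.ae (ae_restrict_mem measurableSet_Ioc)
  filter_upwards [hmem] with p hp
  rw [Real.norm_of_nonneg (Real.exp_nonneg _), mul_left_comm]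
  rcases le_total 0 (s * p.2) with h | h
  · exact (Real.exp_le_exp.2 (mul_le_of_le_one_left h hp.2)).trans
      (le_add_of_nonneg_left zero_le_one)
  · exact (Real.exp_le_one_iff.2 (mul_nonpos_of_nonneg_of_nonpos hp.1.le h)).trans
      (le_add_of_nonneg_right (Real.exp_nonneg _))

lemma mem_integrableExpSet_uniformScaling [IsFiniteMeasure ν] (hs : s ∈ integrableExpSet id ν) :
    s ∈ integrableExpSet id (uniformScaling ν) :=
  (integrable_map_measure (by fun_prop) (by fun_prop)).2 (integrable_exp_mul_mul_prod hs)

lemma mgf_id_uniformScaling [IsFiniteMeasure ν] (hs : s ∈ integrableExpSet id ν) :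
    mgf id (uniformScaling ν) s = ∫ t in 0..1, mgf id ν (t * s) := by
  rw [uniformScaling, mgf_id_map (by fun_prop), mgf,
    integral_prod _ (integrable_exp_mul_mul_prod hs), intervalIntegral.integral_of_le zero_le_one]
  simp only [mgf, id_eq, mul_left_comm s, mul_assoc]

end UniformScaling

theorem det_mgf_add_pos {r : ℕ} {s t : Fin r → ℝ} {ν : Measure ℝ} [SigmaFinite ν]
    (hν : (r : ℕ∞) ≤ ν.support.encard) (hs : StrictMono s) (ht : StrictMono t)
    (hst : ∀ i j, s i + t j ∈ integrableExpSet id ν) :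
    0 < (of fun i j => mgf id ν (s i + t j)).det := by
  have hexp (i j : Fin r) (x : ℝ) :
      Real.exp (s i * x) * Real.exp (t j * x) = Real.exp ((s i + t j) * x) := by
    rw [← Real.exp_add, add_mul]
  have hint (i j : Fin r) : Integrable (fun x => Real.exp (s i * x) * Real.exp (t j * x)) ν := by
    simpa only [hexp, id_eq] using integrable_of_mem_integrableExpSet (hst i j)
  have hpos : 0 < ∫ u : Fin r → ℝ, (of fun i j => Real.exp (s i * u j)).det *
      (of fun i j => Real.exp (t i * u j)).det ∂Measure.pi fun _ => ν := by
    refine (integral_pos_iff_support_of_nonneg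
      (fun u => det_exp_mul_mul_det_exp_mul_nonneg hs ht u) (integrable_det_mul_det hint)).2 ?_
    refine (measure_pi_setOf_injective_pos (by rwa [Fintype.card_fin])).trans_le
      (measure_mono fun u hu => ?_)
    exact (det_exp_mul_mul_det_exp_mul_pos hs ht hu).ne'
  rw [integral_det_mul_det hint] at hpos
  simpa only [hexp, mgf, id_eq] using pos_of_mul_pos_right hpos (Nat.cast_nonneg _)

lemma integral_inv_one_add_mul {z : ℝ} (hz : -1 < z) (hz0 : z ≠ 0) :
    ∫ t in 0..1, (1 + t * z)⁻¹ = Real.log (1 + z) / z := by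
  rw [intervalIntegral.integral_comp_mul_right (fun t => (1 + t)⁻¹) hz0,
    intervalIntegral.integral_comp_add_left (fun t => t⁻¹), zero_mul, add_zero, one_mul,
    integral_inv_of_pos one_pos (by linarith), div_one, smul_eq_mul, inv_mul_eq_div]

lemma mgf_id_uniformScaling_expMeasure_one {z : ℝ} (hz : -1 < z) (hz0 : z ≠ 0) :
    mgf id (uniformScaling (expMeasure 1)) (-z) = Real.log (1 + z) / z := by
  have := isProbabilityMeasure_expMeasure one_pos
  rw [mgf_id_uniformScaling (mem_integrableExpSet_expMeasure one_pos (by linarith)),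
    ← integral_inv_one_add_mul hz hz0]
  refine intervalIntegral.integral_congr fun t ht => ?_
  rw [uIcc_of_le zero_le_one] at ht
  have htz : t * -z < 1 :=
    (convex_Iio (1 : ℝ)).smul_mem_of_zero_mem (mem_Iio.2 one_pos) (by simpa [neg_lt] using hz) ht
  rw [mgf_id_expMeasure one_pos htz, one_div, mul_neg, sub_neg_eq_add]

theorem det_log_one_add_div_pos {r : ℕ} {lam x : Fin r → ℝ} (hlam : StrictAnti lam)
    (hx : StrictAnti x) (hgt : ∀ i j, -1 < lam i + x j) (hne : ∀ i j, lam i + x j ≠ 0) :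
    0 < (of fun i j => Real.log (1 + lam i + x j) / (lam i + x j)).det := by
  have := isProbabilityMeasure_expMeasure one_pos
  have hmgf (i j : Fin r) : mgf id (uniformScaling (expMeasure 1)) (-lam i + -x j) =
      Real.log (1 + lam i + x j) / (lam i + x j) := by
    rw [← neg_add, mgf_id_uniformScaling_expMeasure_one (hgt i j) (hne i j), add_assoc]
  have hsupport : (r : ℕ∞) ≤ (uniformScaling (expMeasure 1)).support.encard :=
    le_top.trans_eq infinite_support_of_nullSingletonClass.encard_eq.symm
  have hdet := det_mgf_add_pos hsupport hlam.neg hx.neg fun i j =>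
    mem_integrableExpSet_uniformScaling (mem_integrableExpSet_expMeasure one_pos
      (by linarith [hgt i j] : -lam i + -x j < 1))
  simpa only [Pi.neg_apply, hmgf] using hdet

lemma div_log_one_add_pos {x : ℝ} (hx : -1 < x) (hx0 : x ≠ 0) : 0 < x / Real.log (1 + x) := by
  rcases hx0.lt_or_gt with hneg | hpos
  · exact div_pos_of_neg_of_neg hneg (Real.log_neg (by linarith) (by linarith))
  · exact div_pos hpos (Real.log_pos (by linarith))

theorem stmt_19_general {r : ℕ} {lam x : Fin r → ℝ} (hlam : StrictAnti lam) (hx : StrictAnti x)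
    (hx_gt : ∀ j, -1 < x j) (hx_ne : ∀ j, x j ≠ 0)
    (hsum_gt : ∀ i j, -1 < lam i + x j) (hsum_ne : ∀ i j, lam i + x j ≠ 0) :
    0 < (of fun i j => Real.log (1 + lam i + x j) / (lam i + x j) *
      (x j / Real.log (1 + x j))).det := by
  have hdet := det_mul_row (fun j => x j / Real.log (1 + x j))
    (of fun i j => Real.log (1 + lam i + x j) / (lam i + x j))
  simp only [of_apply, mul_comm (x _ / _)] at hdet
  rw [hdet]
  exact mul_pos (Finset.prod_pos fun j _ => div_log_one_add_pos (hx_gt j) (hx_ne j))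
    (det_log_one_add_div_pos hlam hx hsum_gt hsum_ne)

/-- The weight function
`w₇(λ,x) = [log(1+λ+x)/(λ+x)] · [x/log(1+x)]` is strictly totally positive of order
infinity on `(0,∞)²`. -/
theorem stmt_19 :
    ∀ r : ℕ, 1 ≤ r → ∀ lam x : Fin r → ℝ,
      (∀ i : Fin r, 0 < lam i) → (∀ j : Fin r, 0 < x j) →
      (∀ i j : Fin r, i < j → lam j < lam i) →
      (∀ i j : Fin r, i < j → x j < x i) →
      0 < Matrix.det (Matrix.of fun i j : Fin r =>
        (Real.log (1 + lam i + x j) / (lam i + x j)) *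
          (x j / Real.log (1 + x j))) := by
  intro r _ lam x hlam_pos hx_pos hlam hx
  exact stmt_19_general hlam hx (fun j => by linarith [hx_pos j]) (fun j => (hx_pos j).ne')
    (fun i j => by linarith [hlam_pos i, hx_pos j]) fun i j => (add_pos (hlam_pos i) (hx_pos j)).ne'
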